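/- Let F and K be linearly disjoint number fields over ℚ of degrees m and n, and let p be a rational prime unramified in F (or in K). Then v_p(Disc(FK)) = n·v_p(Disc(F)) + m·v_p(Disc(K)); equivalently the integer Δ_p(F,K) := Disc_p(F)^n · Disc_p(K)^m / Disc_p(FK) equals 1. -/

import Mathlib

open NumberField in
theorem aux_stmt_17 {E : Type*} [Field E] [NumberField E] (F K : IntermediateField ℚ E)
    (h₁ : F.LinearDisjoint K) (h₂ : F ⊔ K = ⊤)
    (m : ℕ) (hm : Module.finrank ℚ F = m) (d : ℤ) (hd : discr K = d)
    (p : ℕ) (hp : p.Prime) (hunram : ¬ (p : ℤ) ∣ discr F) :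
    padicValInt p (discr E) = m * padicValInt p d := by
  subst hm hd
  have := Fact.mk hp
  let _ : Algebra (FractionRing (𝓞 F)) (FractionRing (𝓞 E)) := FractionRing.liftAlgebra _ _
  have h_main := natAbs_discr_eq_absNorm_differentIdeal_mul_natAbs_discr_pow K (𝓞 K) E (𝓞 E)
  have hd := IsDedekindDomain.differentIdeal_dvd_map_differentIdeal ℤ (𝓞 E) (𝓞 K) (𝓞 F)
    (F₁ := K) (F₂ := F) (K := ℚ) (L := E) (by rwa [IntermediateField.linearDisjoint_comm])
    (by rwa [sup_comm])
  have hd2 := map_dvd Ideal.absNorm hd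
  rw [Ideal.absNorm_algebraMap, absNorm_differentIdeal F] at hd2
  have hnd : ¬ p ∣ Ideal.absNorm (differentIdeal (𝓞 K) (𝓞 E)) := fun h =>
    hunram (Int.natCast_dvd.mpr (hp.dvd_of_dvd_pow (h.trans hd2)))
  have hne : Ideal.absNorm (differentIdeal (𝓞 K) (𝓞 E)) ≠ 0 := by
    intro h; exact hnd (h ▸ dvd_zero p)
  have hK : (discr K).natAbs ≠ 0 := Int.natAbs_ne_zero.mpr (discr_ne_zero K)
  rw [padicValInt, h_main, padicValNat.mul hne (pow_ne_zero _ hK), padicValNat.pow,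
    padicValNat.eq_zero_of_not_dvd hnd, zero_add, h₁.finrank_right_eq_finrank h₂, padicValInt]


/-- Let `F` and `K` be linearly disjoint number fields over `ℚ` of degrees `m` and `n`
(inside a common number field `L`, with `[FK : ℚ] = mn`), and let `p` be a rational prime
unramified in `F` (i.e. `p ∤ Disc(F)`). Then
`v_p(Disc(FK)) = n·v_p(Disc(F)) + m·v_p(Disc(K))`. -/
theorem stmt_17 {L : Type*} [Field L] [NumberField L]
    (F K : IntermediateField ℚ L)
    [NumberField F] [NumberField K] [NumberField ↥(F ⊔ K)]
    (m n : ℕ) (hm : Module.finrank ℚ F = m) (hn : Module.finrank ℚ K = n)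
    (hmn : Module.finrank ℚ ↥(F ⊔ K) = m * n)
    (hdisj : F.LinearDisjoint K)
    (p : ℕ) (hp : p.Prime) (hunram : ¬ (p : ℤ) ∣ NumberField.discr F) :
    padicValInt p (NumberField.discr ↥(F ⊔ K)) =
      n * padicValInt p (NumberField.discr F) + m * padicValInt p (NumberField.discr K) := by
  classical
  let F' := IntermediateField.restrict (le_sup_left : F ≤ F ⊔ K)
  let K' := IntermediateField.restrict (le_sup_right : K ≤ F ⊔ K)
  let eF : F ≃ₐ[ℚ] F' := IntermediateField.restrictAlgEquiv (le_sup_left : F ≤ F ⊔ K)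
  let eK : K ≃ₐ[ℚ] K' := IntermediateField.restrictAlgEquiv (le_sup_right : K ≤ F ⊔ K)
  have hsup : F' ⊔ K' = ⊤ := by
    apply IntermediateField.lift_injective
    rw [IntermediateField.lift_sup, IntermediateField.lift_top, IntermediateField.lift_restrict,
      IntermediateField.lift_restrict]
  have hdF : NumberField.discr F = NumberField.discr F' :=
    NumberField.discr_eq_discr_of_algEquiv F eF
  have hdK : NumberField.discr K = NumberField.discr K' :=
    NumberField.discr_eq_discr_of_algEquiv K eK
  have hfF : Module.finrank ℚ F' = m := by rw [← hm]; exact eF.toLinearEquiv.finrank_eq.symm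
  have hfK : Module.finrank ℚ K' = n := by rw [← hn]; exact eK.toLinearEquiv.finrank_eq.symm
  have hdis : F'.LinearDisjoint K' := by
    apply IntermediateField.LinearDisjoint.of_finrank_sup
    rw [hsup, hfF, hfK, IntermediateField.finrank_top', hmn]
  have h := aux_stmt_17 F' K' hdis hsup m hfF _ hdK.symm p hp (hdF ▸ hunram)
  rw [h, padicValInt.eq_zero_of_not_dvd hunram, mul_zero, zero_add]
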